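/- arXiv:1910.07299 — 2 statements merged into one kernel-verified Lean document; each statement's English description precedes it below -/
import Mathlib

section
/- Let M be an acyclic module over a finite alphabet Λ with n nodes. Then every node s admits an output function of delay at most n; in particular the minimal delay of the output function O_s of s is at most n. -/
/-- A module over alphabet `Λ` with node set `S` and input set `I`:
a family of local functions `f s : Λ^S → Λ^I → Λ`. -/
structure AModule (Λ S I : Type) where
  f : S → (S → Λ) → (I → Λ) → Λ

namespace AModule

variable {Λ S I : Type}

/-- One-step update `M(x,i)`. -/
def upd (M : AModule Λ S I) (x : S → Λ) (i : I → Λ) : S → Λ :=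
  fun s => M.f s x i

/-- Iterated update `M(x,(i_1,…,i_m))`, defined by
`M(x,∅) = x` and `M(x,(i_1,…,i_m)) = M(M(x,i_1),(i_2,…,i_m))`. -/
def seqUpd (M : AModule Λ S I) (x : S → Λ) {m : ℕ} (J : Fin m → I → Λ) : S → Λ :=
  (List.ofFn J).foldl M.upd x

/-- Node `s` influences node `s'`: two configurations over `S ∪ I` differing
exactly at `s` (so with the same input part) on which `f_{s'}` differs. -/
def Influences (M : AModule Λ S I) (s s' : S) : Prop :=
  ∃ (x x' : S → Λ) (i : I → Λ),
    (∀ r, r ≠ s → x r = x' r) ∧ x s ≠ x' s ∧ M.f s' x i ≠ M.f s' x' i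

/-- `M` is acyclic: its interaction digraph has no directed cycle. -/
def Acyclic (M : AModule Λ S I) : Prop :=
  ∀ s, ¬ Relation.TransGen M.Influences s s

/-- `O` is an output function of delay `m` for node `s`. -/
def IsOutputFn (M : AModule Λ S I) (s : S) {m : ℕ}
    (O : (Fin m → I → Λ) → Λ) : Prop :=
  ∀ (x : S → Λ) (J : Fin m → I → Λ), M.seqUpd x J s = O J

/-- The set of delays `m ≥ 1` for which `s` admits an output function. -/
def delaySet (M : AModule Λ S I) (s : S) : Set ℕ :=
  {m | 1 ≤ m ∧ ∃ O : (Fin m → I → Λ) → Λ, M.IsOutputFn s O}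

/-- The complete recursive wiring `↻_ω M` as a map on configurations:
`F(x)_s = f_s(x, (x_{ω(α)})_{α ∈ I})`. -/
def wireF (M : AModule Λ S I) (ω : I → S) : (S → Λ) → (S → Λ) :=
  fun x => M.upd x (fun α => x (ω α))

/-- The input sequence of length `k` generated by `x`:
`Ĵ(x)^k_ℓ = F^{ℓ-1}(x)|_{ω(I)}`. -/
def genSeq (M : AModule Λ S I) (ω : I → S) (x : S → Λ) (k : ℕ) :
    Fin k → I → Λ :=
  fun ℓ α => (M.wireF ω)^[ℓ.val] x (ω α)

end AModule

/-!
Only the influencers of `s` matter for `M(x, i)_s`, so `M(x, (i_1, …, i_m))_s` is determined by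
`i_m` and by `M(x, (i_1, …, i_{m-1}))_r` for the influencers `r` of `s`. If no cycle passes
through `s`, such an `r` has strictly fewer ancestors than `s`. Hence, if no cycle passes through
any ancestor of `s`, no trace of `x` is left at `s` after as many steps as `s` has ancestors.
-/

theorem dependsOn_of_update_eq {ι β : Type*} {π : ι → Type*} [Finite ι] [DecidableEq ι]
    {g : (∀ i, π i) → β} {t : Set ι}
    (h : ∀ a ∉ t, ∀ (x : ∀ i, π i) (v : π a), g (Function.update x a v) = g x) :
    DependsOn g t := by
  classical
  intro x y hxy
  have piecewise_eq (D : Finset ι) (hD : ∀ a ∈ D, a ∉ t) : g (D.piecewise y x) = g x := by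
    induction D using Finset.induction_on with
    | empty => rw [Finset.piecewise_empty]
    | insert a D _ ih =>
      rw [Finset.piecewise_insert, h a (hD a (D.mem_insert_self a))]
      exact ih fun b hb => hD b (Finset.mem_insert_of_mem hb)
  have piecewise_compl : (Set.toFinite tᶜ).toFinset.piecewise y x = y := by
    ext a
    by_cases ha : a ∈ t <;> simp [Finset.piecewise, ha, hxy]
  rw [← piecewise_eq _ fun a ha => (Set.toFinite tᶜ).mem_toFinset.1 ha, piecewise_compl]

namespace AModule

variable {Λ S I : Type} (M : AModule Λ S I)

/-- The ancestors of `s`: the nodes from which the interaction digraph has a directed walk to `s`.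
The empty walk is allowed, so `s` is one of its own ancestors. -/
def ancestors (s : S) : Set S :=
  {r | Relation.ReflTransGen M.Influences r s}

theorem self_mem_ancestors (s : S) : s ∈ M.ancestors s :=
  Relation.ReflTransGen.refl

theorem ncard_ancestors_pos [Finite S] (s : S) : 0 < (M.ancestors s).ncard :=
  (Set.ncard_pos (Set.toFinite _)).2 ⟨s, M.self_mem_ancestors s⟩

variable {M}

theorem Influences.ancestors_subset {r s : S} (hrs : M.Influences r s) :
    M.ancestors r ⊆ M.ancestors s :=
  fun _ ht => ht.tail hrs

theorem Influences.ancestors_ssubset {r s : S} (hrs : M.Influences r s)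
    (hs : ¬ Relation.TransGen M.Influences s s) : M.ancestors r ⊂ M.ancestors s := by
  refine ⟨hrs.ancestors_subset, fun hsr => hs ?_⟩
  exact Relation.TransGen.tail' (hsr (M.self_mem_ancestors s)) hrs

variable (M)

theorem f_update_of_not_influences [DecidableEq S] {a s : S} (ha : ¬ M.Influences a s)
    (x : S → Λ) (v : Λ) (i : I → Λ) : M.f s (Function.update x a v) i = M.f s x i := by
  by_contra hne
  refine ha ⟨Function.update x a v, x, i, fun r hr => Function.update_of_ne hr v x, ?_, hne⟩
  rw [Function.update_self]
  rintro rfl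
  exact hne (by rw [Function.update_eq_self])

theorem dependsOn_influences [Finite S] (s : S) (i : I → Λ) :
    DependsOn (fun x => M.f s x i) {r | M.Influences r s} := by
  classical
  exact dependsOn_of_update_eq fun _ ha x v => M.f_update_of_not_influences ha x v i

variable {M}

theorem foldl_upd_apply_eq_of_ncard_ancestors_le [Finite S] {s : S}
    (hs : ∀ r ∈ M.ancestors s, ¬ Relation.TransGen M.Influences r r) {L : List (I → Λ)}
    (hL : (M.ancestors s).ncard ≤ L.length) (x y : S → Λ) :
    L.foldl M.upd x s = L.foldl M.upd y s := by
  induction L using List.reverseRecOn generalizing s with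
  | nil => exact absurd hL (M.ncard_ancestors_pos s).not_ge
  | append_singleton L i ih =>
    rw [List.foldl_concat, List.foldl_concat]
    refine M.dependsOn_influences s i fun r hr => ?_
    have hlt : (M.ancestors r).ncard < (M.ancestors s).ncard :=
      Set.ncard_lt_ncard (hr.ancestors_ssubset (hs s (M.self_mem_ancestors s)))
    rw [List.length_append, List.length_singleton] at hL
    exact ih (fun t ht => hs t (hr.ancestors_subset ht)) (Nat.le_of_lt_succ (hlt.trans_le hL))

end AModule

theorem statement3_general {Λ S I : Type} [Nonempty Λ] [Finite S] (M : AModule Λ S I) (s : S)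
    (hs : ∀ r ∈ M.ancestors s, ¬ Relation.TransGen M.Influences r r) {m : ℕ}
    (hm : (M.ancestors s).ncard ≤ m) : m ∈ M.delaySet s := by
  obtain ⟨x₀⟩ : Nonempty (S → Λ) := inferInstance
  refine ⟨(M.ncard_ancestors_pos s).trans_le hm, fun J => M.seqUpd x₀ J s, fun x J => ?_⟩
  exact AModule.foldl_upd_apply_eq_of_ncard_ancestors_le hs (by rwa [List.length_ofFn]) x x₀

/-- in an acyclic module with `n` nodes, every node admits an
output function of delay at most `n`; in particular the minimal delay of its
output function is at most `n`. -/
theorem statement3 {Λ S I : Type} [Fintype Λ] [Fintype S] [Fintype I]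
    (hΛ : 2 ≤ Fintype.card Λ)
    (M : AModule Λ S I) (hM : M.Acyclic) (s : S) :
    (∃ m : ℕ, 1 ≤ m ∧ m ≤ Fintype.card S ∧
      ∃ O : (Fin m → I → Λ) → Λ, M.IsOutputFn s O) ∧
    ∀ d : ℕ, IsLeast (M.delaySet s) d → d ≤ Fintype.card S := by
  have : Nonempty Λ := Fintype.card_pos_iff.1 (zero_lt_two.trans_le hΛ)
  have h : Fintype.card S ∈ M.delaySet s := statement3_general M s (fun r _ => hM r)
    ((Set.ncard_le_card _).trans_eq Nat.card_eq_fintype_card)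
  exact ⟨⟨_, h.1, le_rfl, h.2⟩, fun _ hd => hd.2 h⟩
end

section
/- Let M and M' be acyclic modules over a finite alphabet Λ, with node sets S, S' and input sets I, I', let T ⊆ S and T' ⊆ S' with |T| = |T'|, and suppose there are bijections g : I → I' and h : T → T' such that for every s ∈ T the output functions O_s of M and O'_{h(s)} of M' have the same delay and satisfy O_s(J) = O'_{h(s)}(J ∘ g^{-1}) for every input sequence J over I whose length is that delay. Let ω : I → T be total, F = ↻_ω M and F' = ↻_{h∘ω∘g^{-1}} M'. Then for every configuration x lying on a periodic orbit of F there exists a configuration x' lying on a periodic orbit of F' such that for every k ≥ 1, the generated input sequences satisfy Ĵ'(x')^k = Ĵ(x)^k ∘ g^{-1}. -/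
/-!
Let the network `F = ↻_ω M` run autonomously and feed `M'` with the inputs it generates, re-indexed
along `g`. In this joint system a node of `M'` carries, after as many steps as its delay, the same
value as its counterpart in `M`, whatever the initial configuration. A periodic point is a `d`-th
iterate for every `d`, so on periodic points of the joint system these values agree from the start.
There `M'` receives exactly the inputs it would read off its own nodes, so it evolves by
`F' = ↻_{h∘ω∘g⁻¹} M'`. Finiteness of `Λ^{S'}` puts a periodic point of the joint system above every
periodic point of `F`.
-/

section PeriodicPts

open Function

theorem exists_mem_periodicPts_of_mapsTo {X : Type*} {f : X → X} {s : Set X}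
    (hfs : Set.MapsTo f s s) (hs : s.Finite) (hne : s.Nonempty) : ∃ w ∈ s, w ∈ periodicPts f := by
  obtain ⟨z, hz⟩ := hne
  have hmem (n : ℕ) : f^[n] z ∈ s := hfs.iterate n hz
  obtain ⟨m, n, hmn, heq⟩ := hs.exists_lt_map_eq_of_forall_mem hmem
  refine ⟨f^[m] z, hmem m, mk_mem_periodicPts (Nat.sub_pos_of_lt hmn) ?_⟩
  rw [IsPeriodicPt, IsFixedPt, ← iterate_add_apply, Nat.sub_add_cancel hmn.le, heq]

theorem exists_mem_periodicPts_of_semiconj {X Y : Type*} {π : X → Y} {f : X → X} {g : Y → Y}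
    (h : Semiconj π f g) {y : Y} (hy : y ∈ periodicPts g) (hfin : (π ⁻¹' {y}).Finite)
    (hne : (π ⁻¹' {y}).Nonempty) : ∃ w ∈ periodicPts f, π w = y := by
  obtain ⟨p, hp, hgy⟩ := hy
  have hmaps : Set.MapsTo f^[p] (π ⁻¹' {y}) (π ⁻¹' {y}) := by
    rintro w rfl
    exact (h.iterate_right p w).trans hgy
  obtain ⟨w, hwy, n, hn, hw⟩ := exists_mem_periodicPts_of_mapsTo hmaps hfin hne
  refine ⟨w, mk_mem_periodicPts (Nat.mul_pos hp hn) ?_, hwy⟩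
  rwa [IsPeriodicPt, iterate_mul]

theorem exists_iterate_eq_of_mem_periodicPts {X : Type*} {f : X → X} {w : X}
    (hw : w ∈ periodicPts f) (d : ℕ) : ∃ z, f^[d] z = w :=
  let ⟨z, _, hz⟩ := (bijOn_periodicPts f).surjOn.iterate d hw
  ⟨z, hz⟩

end PeriodicPts

namespace AModule

open Function

variable {Λ S S' I I' : Type}

theorem seqUpd_succ (M : AModule Λ S I) (x : S → Λ) {n : ℕ} (J : Fin (n + 1) → I → Λ) :
    M.seqUpd x J = M.upd (M.seqUpd x fun ℓ : Fin n => J ℓ.castSucc) (J (Fin.last n)) := by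
  simp only [seqUpd, List.ofFn_succ', List.concat_eq_append, List.foldl_append, List.foldl_cons,
    List.foldl_nil]

theorem seqUpd_eq_of_forall_succ (M : AModule Λ S I) {y : ℕ → S → Λ} {i : ℕ → I → Λ}
    (hy : ∀ n, y (n + 1) = M.upd (y n) (i n)) (n : ℕ) :
    M.seqUpd (y 0) (fun ℓ : Fin n => i ℓ) = y n := by
  induction n with
  | zero => rfl
  | succ n ih =>
    rw [seqUpd_succ, hy]
    exact congrArg (M.upd · (i n)) ih

theorem seqUpd_genSeq (M : AModule Λ S I) (ω : I → S) (x : S → Λ) (n : ℕ) :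
    M.seqUpd x (M.genSeq ω x n) = (M.wireF ω)^[n] x :=
  M.seqUpd_eq_of_forall_succ (y := fun n => (M.wireF ω)^[n] x)
    (fun n => iterate_succ_apply' (M.wireF ω) n x) n

/-- Nodes `s` of `M` and `s'` of `M'` have output functions of a common delay which agree once
input sequences are re-indexed along `γ : I' → I` (the `g⁻¹` of the theorem). The common delay
`d` is arbitrary rather than minimal. -/
def OutputsAgree (M : AModule Λ S I) (M' : AModule Λ S' I') (γ : I' → I) (s : S) (s' : S') :
    Prop :=
  ∃ (d : ℕ) (O : (Fin d → I → Λ) → Λ) (O' : (Fin d → I' → Λ) → Λ),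
    M.IsOutputFn s O ∧ M'.IsOutputFn s' O' ∧ ∀ J, O J = O' fun ℓ => J ℓ ∘ γ

/-- The joint system in which `↻_ω M` runs autonomously and `M'` is updated with the inputs
generated by `↻_ω M`, re-indexed along `γ`. -/
def cascade (M : AModule Λ S I) (M' : AModule Λ S' I') (γ : I' → I) (ω : I → S)
    (z : (S → Λ) × (S' → Λ)) : (S → Λ) × (S' → Λ) :=
  (M.wireF ω z.1, M'.upd z.2 fun α' => z.1 (ω (γ α')))

section Cascade

variable (M : AModule Λ S I) (M' : AModule Λ S' I') (γ : I' → I) (ω : I → S)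

theorem semiconj_fst_cascade : Semiconj Prod.fst (cascade M M' γ ω) (M.wireF ω) :=
  fun _ => rfl

theorem cascade_iterate_fst (z : (S → Λ) × (S' → Λ)) (n : ℕ) :
    ((cascade M M' γ ω)^[n] z).1 = (M.wireF ω)^[n] z.1 :=
  (semiconj_fst_cascade M M' γ ω).iterate_right n z

theorem cascade_iterate_snd (z : (S → Λ) × (S' → Λ)) (n : ℕ) :
    ((cascade M M' γ ω)^[n] z).2 = M'.seqUpd z.2 fun ℓ => M.genSeq ω z.1 n ℓ ∘ γ := by
  refine (M'.seqUpd_eq_of_forall_succ (y := fun n => ((cascade M M' γ ω)^[n] z).2)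
    (i := fun n α' => (M.wireF ω)^[n] z.1 (ω (γ α'))) (fun n => ?_) n).symm
  rw [iterate_succ_apply', cascade, cascade_iterate_fst]

theorem exists_mem_periodicPts_cascade [Finite Λ] [Finite S'] [Nonempty Λ] {x : S → Λ}
    (hx : x ∈ periodicPts (M.wireF ω)) :
    ∃ x' : S' → Λ, (x, x') ∈ periodicPts (cascade M M' γ ω) := by
  have hfin : (Prod.fst ⁻¹' {x} : Set ((S → Λ) × (S' → Λ))).Finite := by
    rw [← Set.prod_univ]
    exact (Set.finite_singleton x).prod Set.finite_univ
  obtain ⟨x₀'⟩ : Nonempty (S' → Λ) := inferInstance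
  obtain ⟨⟨_, x'⟩, hw, rfl⟩ :=
    exists_mem_periodicPts_of_semiconj (semiconj_fst_cascade M M' γ ω) hx hfin ⟨(x, x₀'), rfl⟩
  exact ⟨x', hw⟩

variable {M M' γ ω}

theorem OutputsAgree.exists_cascade_iterate_eq {s : S} {s' : S'} (h : OutputsAgree M M' γ s s') :
    ∃ d, ∀ z, ((cascade M M' γ ω)^[d] z).2 s' = ((cascade M M' γ ω)^[d] z).1 s := by
  obtain ⟨d, O, O', hO, hO', hOO'⟩ := h
  refine ⟨d, fun z => ?_⟩
  rw [cascade_iterate_fst, cascade_iterate_snd, ← seqUpd_genSeq, hO, hO', hOO']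

theorem OutputsAgree.eq_of_mem_periodicPts_cascade {s : S} {s' : S'}
    (h : OutputsAgree M M' γ s s') {w : (S → Λ) × (S' → Λ)}
    (hw : w ∈ periodicPts (cascade M M' γ ω)) : w.2 s' = w.1 s := by
  obtain ⟨d, hd⟩ := h.exists_cascade_iterate_eq (ω := ω)
  obtain ⟨z, rfl⟩ := exists_iterate_eq_of_mem_periodicPts hw d
  exact hd z

theorem cascade_iterate_snd_of_mem_periodicPts {ω' : I' → S'}
    (hout : ∀ α', OutputsAgree M M' γ (ω (γ α')) (ω' α')) {w : (S → Λ) × (S' → Λ)}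
    (hw : w ∈ periodicPts (cascade M M' γ ω)) (n : ℕ) :
    ((cascade M M' γ ω)^[n] w).2 = (M'.wireF ω')^[n] w.2 := by
  induction n with
  | zero => rfl
  | succ n ih =>
    have hwn := (bijOn_periodicPts (cascade M M' γ ω)).mapsTo.iterate n hw
    have hinput (α' : I') := (hout α').eq_of_mem_periodicPts_cascade hwn
    rw [iterate_succ_apply', iterate_succ_apply', ← ih]
    simp only [cascade, wireF, hinput]

end Cascade

end AModule

theorem statement7_general {Λ S S' I I' : Type} [Finite Λ] [Nonempty Λ] [Finite S']
    (M : AModule Λ S I) (M' : AModule Λ S' I') (γ : I' → I) (ω : I → S) (ω' : I' → S')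
    (hout : ∀ α', AModule.OutputsAgree M M' γ (ω (γ α')) (ω' α'))
    {x : S → Λ} (hx : x ∈ Function.periodicPts (M.wireF ω)) :
    ∃ x' ∈ Function.periodicPts (M'.wireF ω'),
      ∀ k, M'.genSeq ω' x' k = fun ℓ => M.genSeq ω x k ℓ ∘ γ := by
  obtain ⟨x', hw⟩ := AModule.exists_mem_periodicPts_cascade M M' γ ω hx
  have hiter := AModule.cascade_iterate_snd_of_mem_periodicPts hout hw
  refine ⟨x', ?_, fun k => ?_⟩
  · obtain ⟨n, hn, hper⟩ := hw
    exact ⟨n, hn, (hiter n).symm.trans (congrArg Prod.snd hper)⟩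
  · ext ℓ α'
    have hwℓ := (Function.bijOn_periodicPts _).mapsTo.iterate ℓ hw
    have hagree := (hout α').eq_of_mem_periodicPts_cascade hwℓ
    rwa [hiter, AModule.cascade_iterate_fst] at hagree

/-- in the setting of equivalent output functions on `T`, `T'`,
every configuration on a periodic orbit of `F = ↻_ω M` has a counterpart on a
periodic orbit of `F' = ↻_{h∘ω∘g⁻¹} M'` generating, for every `k ≥ 1`, the
input sequence `Ĵ(x)^k ∘ g⁻¹`. -/
theorem statement7 {Λ S S' I I' : Type}
    [Fintype Λ] [Fintype S] [Fintype S'] [Fintype I] [Fintype I']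
    (hΛ : 2 ≤ Fintype.card Λ)
    (M : AModule Λ S I) (M' : AModule Λ S' I')
    (hM : M.Acyclic) (hM' : M'.Acyclic)
    (T : Set S) (T' : Set S') (g : I ≃ I') (h : T ≃ T')
    (hout : ∀ s : T, ∃ d : ℕ,
      IsLeast (M.delaySet s.1) d ∧ IsLeast (M'.delaySet (h s).1) d ∧
      ∀ (O : (Fin d → I → Λ) → Λ) (O' : (Fin d → I' → Λ) → Λ),
        M.IsOutputFn s.1 O → M'.IsOutputFn (h s).1 O' →
        ∀ J : Fin d → I → Λ, O J = O' (fun ℓ α' => J ℓ (g.symm α')))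
    (ω : I → T)
    (F : (S → Λ) → (S → Λ)) (hF : F = M.wireF (fun α => (ω α).1))
    (F' : (S' → Λ) → (S' → Λ))
    (hF' : F' = M'.wireF (fun α' => (h (ω (g.symm α'))).1)) :
    ∀ x : S → Λ, (∃ k, 1 ≤ k ∧ F^[k] x = x) →
      ∃ x' : S' → Λ, (∃ k, 1 ≤ k ∧ F'^[k] x' = x') ∧
        ∀ k : ℕ, 1 ≤ k →
          M'.genSeq (fun α' => (h (ω (g.symm α'))).1) x' k =
          fun ℓ α' => M.genSeq (fun α => (ω α).1) x k ℓ (g.symm α') := by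
  subst hF hF'
  have : Nonempty Λ := Fintype.card_pos_iff.mp (by omega)
  have hagree (s : T) : AModule.OutputsAgree M M' g.symm s (h s) :=
    let ⟨d, ⟨⟨_, O, hO⟩, _⟩, ⟨⟨_, O', hO'⟩, _⟩, hOO'⟩ := hout s
    ⟨d, O, O', hO, hO', hOO' O O' hO hO'⟩
  intro x hx
  obtain ⟨x', hx', hgen⟩ := statement7_general M M' g.symm _ _ (fun α' => hagree (ω (g.symm α'))) hx
  exact ⟨x', hx', fun k _ => hgen k⟩
end
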